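/- arXiv:2305.15057 — 6 statements merged into one kernel-verified Lean document; each statement's English description precedes it below -/
import Mathlib

section
/- A binary tree with distinct node labels is uniquely reconstructable from its inorder and preorder traversals: if t₁ and t₂ are binary trees over a label type α such that inorder(t₁) has no duplicate labels, inorder(t₁) = inorder(t₂), and preorder(t₁) = preorder(t₂), then t₁ = t₂. -/
/-- Binary trees over a label type `α`. -/
inductive BTree (α : Type*) where
  | nil : BTree α
  | node : α → BTree α → BTree α → BTree α

namespace BTree

/-- Inorder traversal. -/
def inorder {α : Type*} : BTree α → List α
  | nil => []
  | node a l r => inorder l ++ [a] ++ inorder r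

/-- Preorder traversal. -/
def preorder {α : Type*} : BTree α → List α
  | nil => []
  | node a l r => [a] ++ preorder l ++ preorder r

end BTree

theorem btree_split_aux {α : Type*} (a : α) : ∀ (l₁ l₂ r₁ r₂ : List α),
    (l₁ ++ a :: r₁).Nodup → l₁ ++ a :: r₁ = l₂ ++ a :: r₂ → l₁ = l₂ ∧ r₁ = r₂
  | [], [], r₁, r₂, _, h => by simpa using h
  | [], b :: l₂, r₁, r₂, hn, h => by
      simp only [List.nil_append, List.cons_append, List.cons.injEq] at h
      obtain ⟨rfl, rfl⟩ := h
      simp at hn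
  | b :: l₁, [], r₁, r₂, hn, h => by
      simp only [List.nil_append, List.cons_append, List.cons.injEq] at h
      obtain ⟨rfl, rfl⟩ := h
      simp at hn
  | b :: l₁, c :: l₂, r₁, r₂, hn, h => by
      simp only [List.cons_append, List.cons.injEq] at h
      obtain ⟨rfl, h⟩ := h
      have hn' := (List.nodup_cons.1 hn).2
      obtain ⟨h1, h2⟩ := btree_split_aux a l₁ l₂ r₁ r₂ hn' h
      exact ⟨by rw [h1], h2⟩

theorem btree_length_aux {α : Type*} (t : BTree α) :
    t.preorder.length = t.inorder.length := by
  induction t with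
  | nil => rfl
  | node a l r ihl ihr =>
    simp only [BTree.preorder, BTree.inorder, List.length_append, ihl, ihr, List.length_cons]
    omega

/-- A binary tree with distinct labels is uniquely determined by its inorder and
preorder traversals. -/
theorem btree_eq_of_inorder_preorder {α : Type*} (t₁ t₂ : BTree α)
    (hnd : t₁.inorder.Nodup)
    (hin : t₁.inorder = t₂.inorder)
    (hpre : t₁.preorder = t₂.preorder) :
    t₁ = t₂ := by
  induction t₁ generalizing t₂ with
  | nil =>
    cases t₂ with
    | nil => rfl
    | node b l' r' => simp [BTree.preorder] at hpre
  | node a l r ihl ihr =>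
    cases t₂ with
    | nil => simp [BTree.preorder] at hpre
    | node b l' r' =>
      simp only [BTree.preorder, BTree.inorder, List.append_assoc, List.cons_append,
        List.nil_append, List.cons.injEq] at hpre hin hnd
      obtain ⟨rfl, hpre⟩ := hpre
      obtain ⟨h1, h2⟩ := btree_split_aux a _ _ _ _ hnd hin
      obtain ⟨h3, h4⟩ := List.append_inj hpre
        (by rw [btree_length_aux, btree_length_aux, h1])
      have hl := (List.nodup_append.1 hnd).1
      have hr := (List.nodup_cons.1 (List.nodup_append.1 hnd).2.1).2
      rw [ihl l' hl h1 h3, ihr r' hr h2 h4]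
end

section
/- Right descendants are characterized by the intersection of the reversed inorder and postorder: let t be a binary tree over a label type α whose inorder traversal has no duplicate labels, and let x, y be labels occurring in t. Then x is a right descendant of y in t (i.e., some subtree of t has root label y and x occurs among the labels of its right child) if and only if y appears strictly before x in inorder(t) and x appears strictly before y in postorder(t). -/
namespace BTree

/-- Postorder traversal. -/
def postorder {α : Type*} : BTree α → List α
  | nil => []
  | node a l r => postorder l ++ postorder r ++ [a]

/-- The subtree relation: `Subtree s t` means `s` is a subtree of `t`. -/
inductive Subtree {α : Type*} : BTree α → BTree α → Prop
  | refl (t : BTree α) : Subtree t t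
  | left {s l r : BTree α} (a : α) : Subtree s l → Subtree s (node a l r)
  | right {s l r : BTree α} (a : α) : Subtree s r → Subtree s (node a l r)

/-- `x` is a right descendant of `y` in `t`: some subtree of `t` has root label `y`
and `x` occurs among the labels of its right child. -/
def RightDescendant {α : Type*} (t : BTree α) (x y : α) : Prop :=
  ∃ l r : BTree α, Subtree (node y l r) t ∧ x ∈ inorder r

/-- `x` appears strictly before `y` in the list `u`. -/
def Before {α : Type*} (u : List α) (x y : α) : Prop :=
  [x, y].Sublist u

end BTree

namespace BTree

theorem before_append {α : Type*} (u v : List α) (x y : α) :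
    Before (u ++ v) x y ↔ Before u x y ∨ (x ∈ u ∧ y ∈ v) ∨ Before v x y := by
  unfold Before
  induction u with
  | nil =>
    simp
  | cons a u ih =>
    rw [List.cons_append, List.sublist_cons_iff, List.sublist_cons_iff, ih]
    simp
    tauto

theorem before_single {α : Type*} (a x y : α) : ¬ Before [a] x y := by
  intro h
  have := List.Sublist.length_le h
  simp at this

theorem before_mem {α : Type*} {u : List α} {x y : α} (h : Before u x y) : x ∈ u ∧ y ∈ u :=
  ⟨h.subset (by simp), h.subset (by simp)⟩

theorem mem_postorder {α : Type*} (t : BTree α) (x : α) : x ∈ t.postorder ↔ x ∈ t.inorder := by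
  induction t with
  | nil => simp [inorder, postorder]
  | node a l r ihl ihr =>
    simp [inorder, postorder, ihl, ihr]
    tauto

theorem rd_node {α : Type*} (a : α) (l r : BTree α) (x y : α) :
    RightDescendant (node a l r) x y ↔
      (y = a ∧ x ∈ r.inorder) ∨ RightDescendant l x y ∨ RightDescendant r x y := by
  constructor
  · rintro ⟨l', r', h, hx⟩
    cases h with
    | refl => exact Or.inl ⟨rfl, hx⟩
    | left _ h => exact Or.inr (Or.inl ⟨l', r', h, hx⟩)
    | right _ h => exact Or.inr (Or.inr ⟨l', r', h, hx⟩)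
  · rintro (⟨rfl, hx⟩ | ⟨l', r', h, hx⟩ | ⟨l', r', h, hx⟩)
    · exact ⟨l, r, .refl _, hx⟩
    · exact ⟨l', r', .left _ h, hx⟩
    · exact ⟨l', r', .right _ h, hx⟩

theorem rd_aux {α : Type*} (t : BTree α) (hnd : t.inorder.Nodup) (x y : α) :
    RightDescendant t x y ↔ Before t.inorder y x ∧ Before t.postorder x y := by
  induction t with
  | nil =>
    constructor
    · rintro ⟨l', r', h, hx⟩
      cases h
    · rintro ⟨h, -⟩
      simp [Before, inorder] at h
  | node a l r ihl ihr =>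
    have hn : (l.inorder ++ [a] ++ r.inorder).Nodup := hnd
    have hl : l.inorder.Nodup := by
      rw [List.nodup_append, List.nodup_append] at hn
      exact hn.1.1
    have hr : r.inorder.Nodup := by
      rw [List.nodup_append] at hn
      exact hn.2.1
    have h1 : ∀ z, z ∈ l.inorder → z ∈ r.inorder → False := by
      intro z
      simp [List.nodup_append] at hn
      grind
    have h2 : a ∉ l.inorder := by
      simp [List.nodup_append] at hn
      grind
    have h3 : a ∉ r.inorder := by
      simp [List.nodup_append] at hn
      grind
    have e1 := fun h => before_mem (u := l.inorder) (x := y) (y := x) h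
    have e2 := fun h => before_mem (u := r.inorder) (x := y) (y := x) h
    have e3 := fun h => before_mem (u := l.postorder) (x := x) (y := y) h
    have e4 := fun h => before_mem (u := r.postorder) (x := x) (y := y) h
    rw [rd_node, ihl hl, ihr hr, inorder, postorder]
    simp only [before_append, before_single, List.mem_append, List.mem_singleton,
      mem_postorder] at *
    grind

end BTree

open BTree in
/-- Right descendants are characterized by the intersection of the reversed inorder and
postorder traversals. -/
theorem rightDescendant_iff {α : Type*} (t : BTree α)
    (hnd : t.inorder.Nodup) (x y : α)
    (hx : x ∈ t.inorder) (hy : y ∈ t.inorder) :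
    RightDescendant t x y ↔ Before t.inorder y x ∧ Before t.postorder x y := by
  exact rd_aux t hnd x y
end

section
/- (Correctness of Algorithm 1 for min-aggregation) Let V be a set, f₁, f₂ : V → ℝ, and let u₀, u₁, …, u_{N−1} be a list of elements of V sorted strictly increasingly by the key f₁ − f₂, i.e., for all indices m < n < N, f₁(u_m) − f₂(u_m) < f₁(u_n) − f₂(u_n). Then for every index n with 1 ≤ n < N: min_{0 ≤ m < n} max(f₁(u_n) − f₁(u_m), f₂(u_n) − f₂(u_m)) = f₁(u_n) + min_{0 ≤ m < n} (−f₁(u_m)). -/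
/-- Correctness of Algorithm 1 for min-aggregation: if `u 0, …, u (N-1)` are sorted
strictly increasingly by the key `f₁ - f₂`, then for every `n` with `1 ≤ n < N`, the
minimum over `m < n` of the pair-wise function equals `f₁ (u n)` plus the minimum over
`m < n` of `-f₁ (u m)`. -/
theorem algorithm1_min_correct {V : Type*} (f₁ f₂ : V → ℝ) (N : ℕ) (u : ℕ → V)
    (hsorted : ∀ m n, m < n → n < N → f₁ (u m) - f₂ (u m) < f₁ (u n) - f₂ (u n)) :
    ∀ n (hn : 1 ≤ n) (hN : n < N),
      (Finset.range n).inf' (Finset.nonempty_range_iff.mpr (by omega))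
        (fun m => max (f₁ (u n) - f₁ (u m)) (f₂ (u n) - f₂ (u m)))
      = f₁ (u n) +
        (Finset.range n).inf' (Finset.nonempty_range_iff.mpr (by omega))
          (fun m => -f₁ (u m)) := by
  intro n hn hN
  have hne : (Finset.range n).Nonempty := Finset.nonempty_range_iff.mpr (by omega)
  apply le_antisymm
  · obtain ⟨m, hm, he⟩ := Finset.exists_mem_eq_inf' hne (fun m => -f₁ (u m))
    rw [he]
    refine (Finset.inf'_le _ hm).trans ?_
    have := hsorted m n (Finset.mem_range.mp hm) hN
    apply max_le <;> linarith
  · refine Finset.le_inf' _ _ fun m hm => ?_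
    have h := Finset.inf'_le (fun m => -f₁ (u m)) hm
    refine le_trans ?_ (le_max_left _ _)
    linarith
end

section
/- (Correctness of Algorithm 1 for log-sum-exp aggregation) Let V be a set, f₁, f₂ : V → ℝ, and let u₀, u₁, …, u_{N−1} be a list of elements of V sorted strictly increasingly by the key f₁ − f₂, i.e., for all indices m < n < N, f₁(u_m) − f₂(u_m) < f₁(u_n) − f₂(u_n). Then for every index n with 1 ≤ n < N: Σ_{0 ≤ m < n} exp(−max(f₁(u_n) − f₁(u_m), f₂(u_n) − f₂(u_m))) = exp(−f₁(u_n)) · Σ_{0 ≤ m < n} exp(f₁(u_m)). -/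
open Real in
/-- Correctness of Algorithm 1 for log-sum-exp aggregation: if `u 0, …, u (N-1)` are
sorted strictly increasingly by the key `f₁ - f₂`, then for every `n` with `1 ≤ n < N`,
the sum over `m < n` of `exp (-P (u n) (u m))` factors as
`exp (-f₁ (u n)) * Σ_{m < n} exp (f₁ (u m))`. -/
theorem algorithm1_logsumexp_correct {V : Type*} (f₁ f₂ : V → ℝ) (N : ℕ) (u : ℕ → V)
    (hsorted : ∀ m n, m < n → n < N → f₁ (u m) - f₂ (u m) < f₁ (u n) - f₂ (u n)) :
    ∀ n (hn : 1 ≤ n) (hN : n < N),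
      ∑ m ∈ Finset.range n,
          exp (-(max (f₁ (u n) - f₁ (u m)) (f₂ (u n) - f₂ (u m))))
      = exp (-f₁ (u n)) * ∑ m ∈ Finset.range n, exp (f₁ (u m)) := by
  intro n hn hN
  rw [Finset.mul_sum]
  refine Finset.sum_congr rfl fun m hm => ?_
  have h := hsorted m n (Finset.mem_range.mp hm) hN
  rw [max_eq_left (by linarith), ← Real.exp_add]
  congr 1
  ring
end

section
/- (Trees are 2-dimensional) Let V be a finite set and r ⊆ V × V a rooted directed tree relation: there is an element ρ ∈ V such that ρ has no outgoing r-edge, every element x ≠ ρ has exactly one outgoing r-edge (its parent edge, pointing toward its head), and every x ≠ ρ reaches ρ under the transitive closure of r. Then the strict ancestor order ≺ (the transitive closure of r), which is a strict partial order, admits a realizer of size 2: there exist strict linear orders <₁ and <₂ on V such that for all x, y ∈ V, x ≺ y iff x <₁ y and x <₂ y. -/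
/-- `lt` is a strict linear order: irreflexive, asymmetric, transitive, and total on
distinct elements. -/
def IsStrictLinearOrderRel {V : Type*} (lt : V → V → Prop) : Prop :=
  (∀ x, ¬ lt x x) ∧ (∀ x y, lt x y → ¬ lt y x) ∧
  (∀ x y z, lt x y → lt y z → lt x z) ∧ (∀ x y, x ≠ y → lt x y ∨ lt y x)

theorem aux_lex_prefix {V : Type*} (s : V → V → Prop) [IsStrictTotalOrder V s] :
    ∀ l₁ l₂ : List V, List.Lex s l₁ l₂ → List.Lex (fun a b => s b a) l₁ l₂ → l₁ <+: l₂ := by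
  intro l₁
  induction l₁ with
  | nil => intro l₂ _ _; exact List.nil_prefix
  | cons a l ih =>
    intro l₂ h1 h2
    cases h1 with
    | cons h =>
      cases h2 with
      | cons h' => exact (List.prefix_cons_inj a).2 (ih _ h h')
      | rel h' => exact absurd h' (irrefl _)
    | rel h =>
      cases h2 with
      | cons h' => exact absurd h (irrefl _)
      | rel h' => exact absurd h' (asymm h)

theorem aux_prefix_lex {V : Type*} (s : V → V → Prop) :
    ∀ l₁ l₂ : List V, l₁ <+: l₂ → l₁ ≠ l₂ → List.Lex s l₁ l₂ := by
  intro l₁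
  induction l₁ with
  | nil =>
    intro l₂ _ h
    cases l₂ with
    | nil => exact absurd rfl h
    | cons b l => exact List.Lex.nil
  | cons a l ih =>
    rintro l₂ ⟨t, rfl⟩ h
    exact List.Lex.cons (ih _ ⟨t, rfl⟩ (fun e => h (congrArg (List.cons a) e)))

theorem aux_lex_trans {V : Type*} (s : V → V → Prop) [IsStrictTotalOrder V s] :
    ∀ l₁ l₂ l₃ : List V, List.Lex s l₁ l₂ → List.Lex s l₂ l₃ → List.Lex s l₁ l₃ := by
  intro l₁ l₂ l₃ h1
  induction h1 generalizing l₃ with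
  | nil =>
    intro h2
    cases h2 <;> exact List.Lex.nil
  | cons h ih =>
    intro h2
    cases h2 with
    | cons h' => exact List.Lex.cons (ih _ h')
    | rel h' => exact List.Lex.rel h'
  | rel h =>
    intro h2
    cases h2 with
    | cons h' => exact List.Lex.rel h
    | rel h' => exact List.Lex.rel (_root_.trans h h')

theorem aux_linear {V : Type*} (s : V → V → Prop) [IsStrictTotalOrder V s]
    (p : V → List V) (hp : Function.Injective p) :
    IsStrictLinearOrderRel (fun x y => List.Lex s (p y) (p x)) := by
  refine ⟨fun x => irrefl _, fun x y h h' => asymm h h', fun x y z h h' => aux_lex_trans s _ _ _ h' h, ?_⟩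
  intro x y hxy
  rcases trichotomous_of (List.Lex s) (p x) (p y) with h | h | h
  · exact Or.inr h
  · exact absurd (hp h) hxy
  · exact Or.inl h

open Relation in
theorem aux_path {V : Type*} (r : V → V → Prop) (hwf : WellFounded (fun y x => r x y))
    (hun : ∀ x y z, r x y → r x z → y = z) :
    ∃ p : V → List V, Function.Injective p ∧ ∀ x y, p y <+: p x ↔ ReflTransGen r x y := by
  classical
  let F : (x : V) → ((y : V) → r x y → List V) → List V := fun x f =>
    if h : ∃ y, r x y then f h.choose h.choose_spec ++ [x] else [x]
  let p : V → List V := hwf.fix F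
  have hp : ∀ x, p x = F x (fun y _ => p y) := fun x => hwf.fix_eq F x
  have hp1 : ∀ x y, r x y → p x = p y ++ [x] := by
    intro x y h
    have he : ∃ y, r x y := ⟨y, h⟩
    rw [hp]
    simp only [F, dif_pos he]
    rw [hun _ _ _ he.choose_spec h]
  have hp0 : ∀ x, (¬ ∃ y, r x y) → p x = [x] := by
    intro x h
    rw [hp]
    simp only [F, dif_neg h]
  have hlast : ∀ x, (p x).getLast? = some x := by
    intro x
    by_cases h : ∃ y, r x y
    · obtain ⟨y, h⟩ := h
      simp [hp1 x y h]
    · simp [hp0 x h]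
  have hinj : Function.Injective p := by
    intro x y h
    have := hlast x
    rw [h, hlast y] at this
    exact (Option.some.inj this).symm
  refine ⟨p, hinj, fun x y => ⟨?_, ?_⟩⟩
  · induction x using hwf.induction with
    | _ x ih =>
      intro h
      by_cases hx : ∃ z, r x z
      · obtain ⟨z, hz⟩ := hx
        rw [hp1 x z hz, List.prefix_concat_iff] at h
        rcases h with h | h
        · rw [← hp1 x z hz] at h
          rw [hinj h]
        · exact ReflTransGen.head hz (ih z hz h)
      · rw [hp0 x hx] at h
        have h2 : p y = [] ∨ p y = [x] := by
          have := List.prefix_concat_iff (l₁ := p y) (l₂ := []) (a := x)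
          simp at this
          rcases List.prefix_cons_iff.1 h with h | ⟨t, h, h'⟩
          · exact Or.inl h
          · right; rw [h, List.prefix_nil.1 h']
        rcases h2 with h2 | h2
        · have := hlast y
          rw [h2] at this
          simp at this
        · rw [← hp0 x hx] at h2
          rw [hinj h2]
  · intro h
    induction h using ReflTransGen.head_induction_on with
    | refl => exact List.prefix_rfl
    | head h _ ih =>
      rw [hp1 _ _ h]
      exact ih.trans (List.prefix_append _ _)

open Relation in
/-- Trees are 2-dimensional: the strict ancestor order of a rooted directed tree on a
finite set is a strict partial order admitting a realizer of size 2. -/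
theorem tree_order_dimension_le_two {V : Type*} [Fintype V] (r : V → V → Prop)
    (ρ : V)
    (hroot : ∀ y, ¬ r ρ y)
    (hparent : ∀ x, x ≠ ρ → ∃! y, r x y)
    (hreach : ∀ x, x ≠ ρ → TransGen r x ρ) :
    ((∀ x, ¬ TransGen r x x) ∧
     (∀ x y, TransGen r x y → ¬ TransGen r y x) ∧
     (∀ x y z, TransGen r x y → TransGen r y z → TransGen r x z)) ∧
    ∃ lt₁ lt₂ : V → V → Prop,
      IsStrictLinearOrderRel lt₁ ∧ IsStrictLinearOrderRel lt₂ ∧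
      ∀ x y, TransGen r x y ↔ lt₁ x y ∧ lt₂ x y := by
  have hun : ∀ x y z, r x y → r x z → y = z := by
    intro x y z hy hz
    have hx : x ≠ ρ := by rintro rfl; exact hroot _ hy
    exact (hparent x hx).unique hy hz
  have hρ : Acc (fun y x => r x y) ρ := ⟨_, fun y h => absurd h (hroot y)⟩
  have hwf : WellFounded (fun y x => r x y) := by
    refine ⟨fun x => ?_⟩
    by_cases hx : x = ρ
    · rw [hx]; exact hρ
    · have h := hreach x hx
      induction h using TransGen.head_induction_on with
      | single h => exact ⟨_, fun y hy => by rw [hun _ _ _ hy h]; exact hρ⟩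
      | @head a c h _ ih =>
        refine ⟨_, fun y hy => ?_⟩
        rw [hun _ _ _ hy h]
        by_cases hc : c = ρ
        · rw [hc]; exact hρ
        · exact ih hc
  have hirr : ∀ x, ¬ TransGen r x x := by
    intro x h
    have h' : TransGen (fun y x => r x y) x x := transGen_swap.2 h
    exact hwf.transGen.irrefl.irrefl x h'
  refine ⟨⟨hirr, fun x y h h' => hirr x (h.trans h'), fun x y z h h' => h.trans h'⟩, ?_⟩
  obtain ⟨p, hinj, hp⟩ := aux_path r hwf hun
  let s : V → V → Prop := WellOrderingRel
  haveI hs : IsStrictTotalOrder V s := inferInstanceAs (IsStrictTotalOrder V WellOrderingRel)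
  haveI hs' : IsStrictTotalOrder V (fun a b => s b a) := IsStrictTotalOrder.swap s
  refine ⟨_, _, aux_linear s p hinj, aux_linear (fun a b => s b a) p hinj, fun x y => ⟨?_, ?_⟩⟩
  · intro h
    have hne : p y ≠ p x := fun e => hirr x (by have := hinj e; rwa [this] at h)
    have hpre := (hp x y).2 h.to_reflTransGen
    exact ⟨aux_prefix_lex _ _ _ hpre hne, aux_prefix_lex _ _ _ hpre hne⟩
  · rintro ⟨h1, h2⟩
    have h := (hp x y).1 (aux_lex_prefix s _ _ h1 h2)
    rcases reflTransGen_iff_eq_or_transGen.1 h with h | h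
    · rw [h] at h1; exact absurd h1 (irrefl _)
    · exact h
end

section
/- (Forests are 2-dimensional) Let V be a finite set and r ⊆ V × V a forest relation: every element has at most one outgoing r-edge, and the transitive closure of r is irreflexive (no cycles). Then the strict ancestor order ≺ (the transitive closure of r), which is a strict partial order, admits a realizer of size 2: there exist strict linear orders <₁ and <₂ on V such that for all x, y ∈ V, x ≺ y iff x <₁ y and x <₂ y. -/
/-- `x` hangs off a sibling with smaller label than the one `y` hangs off. -/
def LeftOf {V : Type*} (P : V → V → Prop) (e : V → ℤ) (x y : V) : Prop :=
  ∃ a b, (x = a ∨ P x a) ∧ (y = b ∨ P y b) ∧ (∀ z, P a z ↔ P b z) ∧ e a < e b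

lemma leftOf_irrefl {V : Type*} (P : V → V → Prop) (e : V → ℤ)
    (hi : ∀ x, ¬ P x x)
    (hc : ∀ x y z, P x y → P x z → y = z ∨ P y z ∨ P z y) (x : V) : ¬ LeftOf P e x x := by
  rintro ⟨a, b, ha, hb, hs, hl⟩
  have h : a = b ∨ P a b ∨ P b a := by
    rcases ha with rfl | ha <;> rcases hb with rfl | hb
    · exact Or.inl rfl
    · exact Or.inr (Or.inl hb)
    · exact Or.inr (Or.inr ha)
    · exact hc _ _ _ ha hb
  rcases h with rfl | h | h
  · exact lt_irrefl _ hl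
  · exact hi _ ((hs b).1 h)
  · exact hi _ ((hs a).2 h)

lemma leftOf_down {V : Type*} (P : V → V → Prop) (e : V → ℤ)
    (ht : ∀ x y z, P x y → P y z → P x z) {x y z : V} (h : P x y) (h' : LeftOf P e y z) :
    LeftOf P e x z := by
  obtain ⟨a, b, ha, hb, hs, hl⟩ := h'
  refine ⟨a, b, Or.inr ?_, hb, hs, hl⟩
  rcases ha with rfl | ha
  · exact h
  · exact ht _ _ _ h ha

lemma leftOf_neg {V : Type*} (P : V → V → Prop) (e : V → ℤ) (x y : V) :
    LeftOf P (fun v => - e v) x y ↔ LeftOf P e y x := by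
  constructor
  · rintro ⟨a, b, ha, hb, hs, hl⟩
    exact ⟨b, a, hb, ha, fun z => (hs z).symm, by simpa using hl⟩
  · rintro ⟨a, b, ha, hb, hs, hl⟩
    exact ⟨b, a, hb, ha, fun z => (hs z).symm, by simpa using hl⟩

lemma leftOf_trans {V : Type*} (P : V → V → Prop) (e : V → ℤ)
    (ht : ∀ x y z, P x y → P y z → P x z)
    (hc : ∀ x y z, P x y → P x z → y = z ∨ P y z ∨ P z y)
    {x y z : V} (h : LeftOf P e x y) (h' : LeftOf P e y z) : LeftOf P e x z := by
  obtain ⟨a, b, ha, hb, hs, hl⟩ := h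
  obtain ⟨b', c, hb', hcc, hs', hl'⟩ := h'
  have h : b = b' ∨ P b b' ∨ P b' b := by
    rcases hb with rfl | hb <;> rcases hb' with rfl | hb'
    · exact Or.inl rfl
    · exact Or.inr (Or.inl hb')
    · exact Or.inr (Or.inr hb)
    · exact hc _ _ _ hb hb'
  rcases h with rfl | h | h
  · exact ⟨a, c, ha, hcc, fun z => (hs z).trans (hs' z), hl.trans hl'⟩
  · refine ⟨b', c, Or.inr ?_, hcc, hs', hl'⟩
    have := (hs _).2 h
    rcases ha with rfl | ha
    · exact this
    · exact ht _ _ _ ha this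
  · refine ⟨a, b, ha, Or.inr ?_, hs, hl⟩
    have := (hs' _).1 h
    rcases hcc with rfl | ha
    · exact this
    · exact ht _ _ _ ha this

lemma leftOf_up {V : Type*} (P : V → V → Prop) (e : V → ℤ)
    (ht : ∀ x y z, P x y → P y z → P x z)
    (hc : ∀ x y z, P x y → P x z → y = z ∨ P y z ∨ P z y)
    {x y z : V} (h : LeftOf P e x y) (h' : P y z) : P x z ∨ LeftOf P e x z := by
  obtain ⟨a, b, ha, hb, hs, hl⟩ := h
  have h : z = b ∨ P z b ∨ P b z := by
    rcases hb with rfl | hb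
    · exact Or.inr (Or.inr h')
    · exact hc _ _ _ h' hb
  rcases h with h | h | h
  · exact Or.inr ⟨a, b, ha, Or.inl h, hs, hl⟩
  · exact Or.inr ⟨a, b, ha, Or.inr h, hs, hl⟩
  · have := (hs _).2 h
    rcases ha with rfl | ha
    · exact Or.inl this
    · exact Or.inl (ht _ _ _ ha this)

lemma exists_top {V : Type*} [Finite V] (P : V → V → Prop)
    (hi : ∀ x, ¬ P x x) (ht : ∀ x y z, P x y → P y z → P x z) (x y : V)
    (hxy : ¬ (y = x ∨ P y x)) :
    ∃ a, (x = a ∨ P x a) ∧ ¬ (y = a ∨ P y a) ∧ ∀ z, P a z → (y = z ∨ P y z) := by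
  have : IsTrans V (Function.swap P) := ⟨fun a b c h h' => ht _ _ _ h' h⟩
  have : Std.Irrefl (Function.swap P) := ⟨hi⟩
  have wf : WellFounded (Function.swap P) := Finite.wellFounded_of_trans_of_irrefl _
  obtain ⟨a, ⟨h1, h2⟩, h3⟩ := wf.has_min {a | (x = a ∨ P x a) ∧ ¬ (y = a ∨ P y a)}
    ⟨x, Or.inl rfl, hxy⟩
  refine ⟨a, h1, h2, fun z hz => ?_⟩
  by_contra h
  refine h3 z ⟨Or.inr ?_, h⟩ hz
  rcases h1 with rfl | h1
  · exact hz
  · exact ht _ _ _ h1 hz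

lemma leftOf_total {V : Type*} [Finite V] (P : V → V → Prop) (e : V → ℤ)
    (he : Function.Injective e)
    (hi : ∀ x, ¬ P x x) (ht : ∀ x y z, P x y → P y z → P x z)
    (hc : ∀ x y z, P x y → P x z → y = z ∨ P y z ∨ P z y) (x y : V)
    (hne : x ≠ y) (h1 : ¬ P x y) (h2 : ¬ P y x) : LeftOf P e x y ∨ LeftOf P e y x := by
  obtain ⟨a, ha, ha', ha''⟩ := exists_top P hi ht x y (by grind)
  obtain ⟨b, hb, hb', hb''⟩ := exists_top P hi ht y x (by grind)
  have hs : ∀ z, P a z ↔ P b z := by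
    intro z
    constructor
    · intro h
      have := ha'' z h
      have hxz : P x z := by grind
      have : b = z ∨ P b z ∨ P z b := by grind
      grind
    · intro h
      have := hb'' z h
      have hxz : P y z := by grind
      have : a = z ∨ P a z ∨ P z a := by grind
      grind
  have hab : a ≠ b := by grind
  rcases lt_or_gt_of_ne (he.ne hab) with h | h
  · exact Or.inl ⟨a, b, ha, hb, hs, h⟩
  · exact Or.inr ⟨b, a, hb, ha, fun z => (hs z).symm, h⟩

lemma strictLinear_aux {V : Type*} [Finite V] (P : V → V → Prop) (e : V → ℤ)
    (he : Function.Injective e)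
    (hi : ∀ x, ¬ P x x) (ht : ∀ x y z, P x y → P y z → P x z)
    (hc : ∀ x y z, P x y → P x z → y = z ∨ P y z ∨ P z y) :
    IsStrictLinearOrderRel (fun x y => P x y ∨ LeftOf P e x y) := by
  have irr : ∀ x, ¬ (P x x ∨ LeftOf P e x x) := fun x h =>
    h.elim (hi x) (leftOf_irrefl P e hi hc x)
  have tr : ∀ x y z, (P x y ∨ LeftOf P e x y) → (P y z ∨ LeftOf P e y z) →
      (P x z ∨ LeftOf P e x z) := by
    rintro x y z (h | h) (h' | h')
    · exact Or.inl (ht _ _ _ h h')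
    · exact Or.inr (leftOf_down P e ht h h')
    · exact leftOf_up P e ht hc h h'
    · exact Or.inr (leftOf_trans P e ht hc h h')
  refine ⟨irr, fun x y h h' => irr x (tr _ _ _ h h'), tr, fun x y hne => ?_⟩
  by_cases h1 : P x y
  · exact Or.inl (Or.inl h1)
  by_cases h2 : P y x
  · exact Or.inr (Or.inl h2)
  exact (leftOf_total P e he hi ht hc x y hne h1 h2).imp Or.inr Or.inr

open Relation in
/-- Forests are 2-dimensional: the strict ancestor order of a forest on a finite set is
a strict partial order admitting a realizer of size 2. -/
theorem forest_order_dimension_le_two {V : Type*} [Fintype V] (r : V → V → Prop)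
    (hfun : ∀ x y z, r x y → r x z → y = z)
    (hacyclic : ∀ x, ¬ TransGen r x x) :
    ((∀ x, ¬ TransGen r x x) ∧
     (∀ x y, TransGen r x y → ¬ TransGen r y x) ∧
     (∀ x y z, TransGen r x y → TransGen r y z → TransGen r x z)) ∧
    ∃ lt₁ lt₂ : V → V → Prop,
      IsStrictLinearOrderRel lt₁ ∧ IsStrictLinearOrderRel lt₂ ∧
      ∀ x y, TransGen r x y ↔ lt₁ x y ∧ lt₂ x y := by
  have ht : ∀ x y z, TransGen r x y → TransGen r y z → TransGen r x z :=
    fun _ _ _ h h' => h.trans h'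
  refine ⟨⟨hacyclic, fun x y h h' => hacyclic x (h.trans h'), ht⟩, ?_⟩
  have hc : ∀ x y z, TransGen r x y → TransGen r x z →
      y = z ∨ TransGen r y z ∨ TransGen r z y := by
    intro x y z h h'
    have hu : Relator.RightUnique r := fun a b c h1 h2 => hfun a b c h1 h2
    rcases ReflTransGen.total_of_right_unique hu h.to_reflTransGen h'.to_reflTransGen with h | h
    · rcases reflTransGen_iff_eq_or_transGen.1 h with h | h
      · exact Or.inl h.symm
      · exact Or.inr (Or.inl h)
    · rcases reflTransGen_iff_eq_or_transGen.1 h with h | h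
      · exact Or.inl h
      · exact Or.inr (Or.inr h)
  let e : V → ℤ := fun v => ((Fintype.equivFin V v : ℕ) : ℤ)
  have he : Function.Injective e := by
    intro a b h
    apply (Fintype.equivFin V).injective
    apply Fin.ext
    exact Int.ofNat.inj h
  have he' : Function.Injective (fun v => - e v) := fun a b h => he (neg_injective h)
  refine ⟨_, _, strictLinear_aux (TransGen r) e he hacyclic ht hc,
    strictLinear_aux (TransGen r) _ he' hacyclic ht hc, fun x y => ?_⟩
  constructor
  · exact fun h => ⟨Or.inl h, Or.inl h⟩
  · rintro ⟨h | h, h' | h'⟩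
    · exact h
    · exact h
    · exact h'
    · exact absurd (leftOf_trans _ e ht hc h ((leftOf_neg _ e x y).1 h'))
        (leftOf_irrefl _ e hacyclic hc x)
end
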